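/- (Input-to-state stability of the framer error, continuous-time case.) Let Q ∈ ℝ^{m×m} with μ := μ_∞(Q) < 0, let f ∈ ℝ^m, and let ε : ℝ → ℝ^m be differentiable with ε'(t) = Q^m ε(t) + f for all t ≥ 0, where Q^m is the Metzlerization of Q. Then for all t ≥ 0, ‖ε(t)‖_∞ ≤ exp(μ t) ‖ε(0)‖_∞ + ((exp(μ t) − 1)/μ) ‖f‖_∞. In particular, the error is input-to-state stable: ‖ε(t)‖_∞ ≤ exp(μ t) ‖ε(0)‖_∞ + (−1/μ) ‖f‖_∞. -/

import Mathlib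

open Matrix Finset

/-- Logarithmic norm induced by the vector ∞-norm: `μ_∞(Q) = max_i (Q i i + ∑_{j≠i} |Q i j|)`. -/
noncomputable def muInf {m : ℕ} (Q : Matrix (Fin m) (Fin m) ℝ) : ℝ :=
  ⨆ i, (Q i i + ∑ j ∈ Finset.univ.filter (fun j => j ≠ i), |Q i j|)

/-- Induced matrix ∞-norm: `‖Q‖_∞ = max_i ∑_j |Q i j|`. -/
noncomputable def normInf {m p : ℕ} (Q : Matrix (Fin m) (Fin p) ℝ) : ℝ :=
  ⨆ i, ∑ j, |Q i j|

/-- Vector ∞-norm: `‖v‖_∞ = max_i |v i|`. -/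
noncomputable def vecNormInf {m : ℕ} (v : Fin m → ℝ) : ℝ := ⨆ i, |v i|

/-- Metzlerization `Q^m`: keep the diagonal, take absolute values off-diagonal. -/
def metzlerize {m : ℕ} (Q : Matrix (Fin m) (Fin m) ℝ) : Matrix (Fin m) (Fin m) ℝ :=
  Matrix.of fun i j => if i = j then Q i j else |Q i j|

/-- Entrywise absolute value `|M|`. -/
def matAbs {p q : ℕ} (M : Matrix (Fin p) (Fin q) ℝ) : Matrix (Fin p) (Fin q) ℝ :=
  Matrix.of fun i j => |M i j|

/-- Entrywise positive part `M⁺`. -/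
def matPos {p q : ℕ} (M : Matrix (Fin p) (Fin q) ℝ) : Matrix (Fin p) (Fin q) ℝ :=
  Matrix.of fun i j => max (M i j) 0

/-- Entrywise negative part `M⁻ := M⁺ − M`. -/
def matNeg {p q : ℕ} (M : Matrix (Fin p) (Fin q) ℝ) : Matrix (Fin p) (Fin q) ℝ :=
  matPos M - M

/-- `Q↑ := Q^d + (Q^{nd})⁺` (diagonal plus positive part of the off-diagonal). -/
def matUp {m : ℕ} (Q : Matrix (Fin m) (Fin m) ℝ) : Matrix (Fin m) (Fin m) ℝ :=
  Matrix.of fun i j => if i = j then Q i j else max (Q i j) 0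

/-- `Q↓ := (Q^{nd})⁻` (negative part of the off-diagonal). -/
def matDown {m : ℕ} (Q : Matrix (Fin m) (Fin m) ℝ) : Matrix (Fin m) (Fin m) ℝ :=
  Matrix.of fun i j => if i = j then 0 else max (Q i j) 0 - Q i j

theorem vecNormInf_eq_norm_aux {m : ℕ} (v : Fin m → ℝ) : vecNormInf v = ‖v‖ := by
  unfold vecNormInf
  apply le_antisymm
  · exact Real.iSup_le (fun i => norm_le_pi_norm v i) (norm_nonneg _)
  · have h0 : 0 ≤ ⨆ i, |v i| := Real.iSup_nonneg fun i => abs_nonneg _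
    refine (pi_norm_le_iff_of_nonneg h0).2 fun i => ?_
    exact le_ciSup (f := fun i => |v i|) (Set.finite_range _).bddAbove i

theorem metz_step_aux {m : ℕ} (Q : Matrix (Fin m) (Fin m) ℝ) (v : Fin m → ℝ) (h : ℝ)
    (hh : 0 ≤ h) (hm : 0 ≤ 1 + h * muInf Q) (hd : ∀ i, 0 ≤ 1 + h * Q i i) :
    ‖v + h • (metzlerize Q).mulVec v‖ ≤ (1 + h * muInf Q) * ‖v‖ := by
  refine (pi_norm_le_iff_of_nonneg (mul_nonneg hm (norm_nonneg _))).2 fun i => ?_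
  have hmu : Q i i + ∑ j ∈ Finset.univ.filter (fun j => j ≠ i), |Q i j| ≤ muInf Q :=
    le_ciSup (f := fun i => Q i i + ∑ j ∈ Finset.univ.filter (fun j => j ≠ i), |Q i j|)
      (Set.finite_range _).bddAbove i
  have hmv : (metzlerize Q).mulVec v i =
      Q i i * v i + ∑ j ∈ Finset.univ.filter (fun j => j ≠ i), |Q i j| * v j := by
    simp only [Matrix.mulVec, dotProduct, metzlerize, Matrix.of_apply]
    rw [← Finset.add_sum_erase _ _ (Finset.mem_univ i)]
    rw [Finset.filter_ne' Finset.univ i]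
    congr 1
    · simp
    · apply Finset.sum_congr rfl
      intro j hj
      have : i ≠ j := (Finset.ne_of_mem_erase hj).symm
      simp [this]
  have hs : |∑ j ∈ Finset.univ.filter (fun j => j ≠ i), |Q i j| * v j| ≤
      (∑ j ∈ Finset.univ.filter (fun j => j ≠ i), |Q i j|) * ‖v‖ := by
    refine (Finset.abs_sum_le_sum_abs _ _).trans ?_
    rw [Finset.sum_mul]
    refine Finset.sum_le_sum fun j _ => ?_
    rw [abs_mul, abs_abs]
    exact mul_le_mul_of_nonneg_left (norm_le_pi_norm v j) (abs_nonneg _)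
  have hv : |v i| ≤ ‖v‖ := norm_le_pi_norm v i
  simp only [Pi.add_apply, Pi.smul_apply, smul_eq_mul, Real.norm_eq_abs, hmv]
  set S := ∑ j ∈ Finset.univ.filter (fun j => j ≠ i), |Q i j| * v j
  set T := ∑ j ∈ Finset.univ.filter (fun j => j ≠ i), |Q i j|
  calc |v i + h * (Q i i * v i + S)| = |(1 + h * Q i i) * v i + h * S| := by ring_nf
    _ ≤ (1 + h * Q i i) * |v i| + h * |S| := by
        refine (abs_add_le _ _).trans ?_
        rw [abs_mul, abs_mul, abs_of_nonneg (hd i), abs_of_nonneg hh]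
    _ ≤ (1 + h * Q i i) * ‖v‖ + h * (T * ‖v‖) :=
        add_le_add (mul_le_mul_of_nonneg_left hv (hd i)) (mul_le_mul_of_nonneg_left hs hh)
    _ = (1 + h * (Q i i + T)) * ‖v‖ := by ring
    _ ≤ (1 + h * muInf Q) * ‖v‖ := by gcongr

open Filter Topology in
theorem slope_aux {m : ℕ} (Q : Matrix (Fin m) (Fin m) ℝ) (f : Fin m → ℝ) (eps : ℝ → Fin m → ℝ)
    (x : ℝ) (hx : HasDerivAt eps ((metzlerize Q).mulVec (eps x) + f) x) (r : ℝ)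
    (hr : muInf Q * ‖eps x‖ + ‖f‖ < r) :
    ∀ᶠ z in 𝓝[>] x, (z - x)⁻¹ * (‖eps z‖ - ‖eps x‖) < r := by
  have key : ∀ a : ℝ, ∀ᶠ z in 𝓝[>] x, 0 ≤ 1 + (z - x) * a := by
    intro a
    have : ContinuousAt (fun z : ℝ => 1 + (z - x) * a) x := by fun_prop
    have h2 : ∀ᶠ z in 𝓝 x, 0 < 1 + (z - x) * a :=
      this.eventually (lt_mem_nhds (by simp))
    exact (h2.filter_mono nhdsWithin_le_nhds).mono fun z hz => hz.le
  have hc : 0 < (r - (muInf Q * ‖eps x‖ + ‖f‖)) / 2 := by linarith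
  have ho := ((hasDerivAt_iff_isLittleO.1 hx).bound hc).filter_mono
    (nhdsWithin_le_nhds (s := Set.Ioi x))
  filter_upwards [key (muInf Q), eventually_all.2 (fun i => key (Q i i)), ho,
    self_mem_nhdsWithin] with z h1 h2 h3 h4
  have hz : 0 < z - x := sub_pos.2 h4
  have h5 := metz_step_aux Q (eps x) (z - x) hz.le h1 h2
  rw [Real.norm_of_nonneg hz.le] at h3
  have h6 : eps z = (eps x + (z - x) • (metzlerize Q).mulVec (eps x)) + (z - x) • f +
      (eps z - eps x - (z - x) • ((metzlerize Q).mulVec (eps x) + f)) := by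
    rw [smul_add]; abel
  have h7 : ‖eps z‖ ≤ (1 + (z - x) * muInf Q) * ‖eps x‖ + (z - x) * ‖f‖ +
      (r - (muInf Q * ‖eps x‖ + ‖f‖)) / 2 * (z - x) := by
    rw [h6]
    refine norm_add₃_le.trans ?_
    rw [norm_smul, Real.norm_of_nonneg hz.le]
    gcongr
  rw [inv_mul_lt_iff₀ hz]
  nlinarith [mul_pos hz hc]

/-- input-to-state stability of the framer error (continuous-time case). -/
theorem framer_error_ISS_CT {m : ℕ} (Q : Matrix (Fin m) (Fin m) ℝ)
    (hq : muInf Q < 0) (f : Fin m → ℝ) (eps : ℝ → Fin m → ℝ)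
    (heps : ∀ t : ℝ, 0 ≤ t →
      HasDerivAt eps ((metzlerize Q).mulVec (eps t) + f) t) :
    ∀ t : ℝ, 0 ≤ t →
      vecNormInf (eps t) ≤ Real.exp (muInf Q * t) * vecNormInf (eps 0)
          + ((Real.exp (muInf Q * t) - 1) / muInf Q) * vecNormInf f ∧
      vecNormInf (eps t) ≤ Real.exp (muInf Q * t) * vecNormInf (eps 0)
          + (-1 / muInf Q) * vecNormInf f := by
  intro t ht
  simp only [vecNormInf_eq_norm_aux]
  have hg := le_gronwallBound_of_liminf_deriv_right_le (f := fun s => ‖eps s‖)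
    (f' := fun s => muInf Q * ‖eps s‖ + ‖f‖) (δ := ‖eps 0‖) (K := muInf Q) (ε := ‖f‖)
    (a := 0) (b := t)
    (fun s hs => (heps s hs.1).continuousAt.norm.continuousWithinAt)
    (fun s hs r hr => (slope_aux Q f eps s (heps s hs.1) r hr).frequently)
    le_rfl (fun s _ => le_rfl) t ⟨ht, le_rfl⟩
  rw [gronwallBound_of_K_ne_0 hq.ne, sub_zero] at hg
  have h1 : ‖eps t‖ ≤ Real.exp (muInf Q * t) * ‖eps 0‖
      + ((Real.exp (muInf Q * t) - 1) / muInf Q) * ‖f‖ := by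
    refine hg.trans (le_of_eq ?_)
    ring
  refine ⟨h1, h1.trans ?_⟩
  refine add_le_add le_rfl (mul_le_mul_of_nonneg_right ?_ (norm_nonneg _))
  refine (div_le_div_right_of_neg hq).2 ?_
  linarith [Real.exp_pos (muInf Q * t)]
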